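/- arXiv:2011.01702 — 3 statements merged into one kernel-verified Lean document; each statement's English description precedes it below -/
import Mathlib

section
/- Let T be a triangulated category with a semiorthogonal decomposition T = ⟨T₁, T₂⟩, and let T₁^{≤0} and T₂^{≤0} be t-structures on T₁ and T₂ respectively that are compatible in T. Then the full subcategory T^{≤0} := T₂^{≤0} * (T₁^{≤0}[1]) is a t-structure on T. -/
open CategoryTheory Category Limits Pretriangulated

namespace Paper

universe v u

variable {C : Type u} [Category.{v} C] [HasZeroObject C] [Preadditive C]
  [HasShift C ℤ] [∀ n : ℤ, (shiftFunctor C n).Additive] [Pretriangulated C]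

/-- The right orthogonal of a set of objects: objects receiving only zero maps. -/
def rOrth (S : Set C) : Set C := {Y | ∀ X ∈ S, ∀ f : X ⟶ Y, f = 0}

/-- Shift of a set of objects by `n` (closed under isomorphism). -/
def shSet (S : Set C) (n : ℤ) : Set C := {Y | ∃ X ∈ S, Nonempty (Y ≅ X⟦n⟧)}

/-- The `*` operation on sets of objects of a triangulated category. -/
def star (X Y : Set C) : Set C :=
  {Z | ∃ (A : C) (_ : A ∈ X) (B : C) (_ : B ∈ Y) (f : A ⟶ Z) (g : Z ⟶ B)
    (h : B ⟶ A⟦(1 : ℤ)⟧), Triangle.mk f g h ∈ distTriang C}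

/-- A strictly full triangulated subcategory, encoded as a set of objects. -/
structure IsTriangulatedSub (S : Set C) : Prop where
  zero : ∀ X : C, IsZero X → X ∈ S
  isoClosed : ∀ {X Y : C}, (X ≅ Y) → X ∈ S → Y ∈ S
  shift : ∀ (n : ℤ), ∀ X ∈ S, X⟦n⟧ ∈ S
  ext₂ : ∀ T ∈ distTriang C, T.obj₁ ∈ S → T.obj₃ ∈ S → T.obj₂ ∈ S

/-- A t-structure on the full triangulated subcategory `S ⊆ C`, given by its aisle
`le` (playing the role of `S^{≤ 0}`).  The coaisle `S^{≥ 1}` is `S ∩ rOrth le`. -/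
structure IsTStructureOn (S le : Set C) : Prop where
  subset : le ⊆ S
  isoClosed : ∀ {X Y : C}, (X ≅ Y) → X ∈ le → Y ∈ le
  shift : ∀ X ∈ le, X⟦(1 : ℤ)⟧ ∈ le
  exists_triangle : ∀ E ∈ S, ∃ (A B : C) (_ : A ∈ le) (_ : B ∈ S ∩ rOrth le)
    (f : A ⟶ E) (g : E ⟶ B) (h : B ⟶ A⟦(1 : ℤ)⟧), Triangle.mk f g h ∈ distTriang C

/-- `S^{≤ i} := S^{≤ 0}[-i]`. -/
def leN (le : Set C) (i : ℤ) : Set C := shSet le (-i)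

/-- `S^{≥ j} := S^{≥ 1}[-j+1]`. -/
def geN (S le : Set C) (j : ℤ) : Set C := shSet (S ∩ rOrth le) (1 - j)

/-- The heart `S^{≤ 0} ∩ S^{≥ 0}` of a t-structure on `S`. -/
def heartOn (S le : Set C) : Set C := leN le 0 ∩ geN S le 0

/-- Boundedness of a t-structure on `S`. -/
def IsBoundedOn (S le : Set C) : Prop := ∀ E ∈ S, ∃ i j : ℤ, E ∈ leN le i ∧ E ∈ geN S le j

/-- Non-degeneracy of a t-structure on `S`. -/
def IsNonDegenerateOn (S le : Set C) : Prop :=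
  (∀ E : C, (∀ i : ℤ, E ∈ leN le i) → IsZero E) ∧
  (∀ E : C, (∀ j : ℤ, E ∈ geN S le j) → IsZero E)

/-- A semiorthogonal decomposition `C = ⟨S₁, S₂⟩`. -/
structure IsSOD (S₁ S₂ : Set C) : Prop where
  sub₁ : IsTriangulatedSub S₁
  sub₂ : IsTriangulatedSub S₂
  orth : ∀ X ∈ S₂, ∀ Y ∈ S₁, ∀ f : X ⟶ Y, f = 0
  exists_triangle : ∀ E : C, ∃ (A B : C) (_ : A ∈ S₂) (_ : B ∈ S₁)
    (f : A ⟶ E) (g : E ⟶ B) (h : B ⟶ A⟦(1 : ℤ)⟧), Triangle.mk f g h ∈ distTriang C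

/-- Compatibility of t-structures `le₁` on `S₁` and `le₂` on `S₂` in `C`:
`Hom(S₁^{≤0}, S₂^{≥1}) = 0`. -/
def Compatible (S₂ le₁ le₂ : Set C) : Prop :=
  ∀ X ∈ le₁, ∀ Y ∈ S₂ ∩ rOrth le₂, ∀ f : X ⟶ Y, f = 0

/-- The glued aisle `T^{≤0} := T₂^{≤0} * (T₁^{≤0}[1])`. -/
def glued (le₁ le₂ : Set C) : Set C := star le₂ (shSet le₁ 1)

/-!
Truncating the two pieces of an arbitrary `E`, with the t-structure of `S₁` shifted by `1`, shows
that `E ∈ (T₂^{≤0} * T₂^{≥1}) * (T₁^{≤0}[1] * T₁^{≥1}[1])`. Compatibility lets one interchange the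
two middle terms: the triangle `E₂ → E → E₁` receives a morphism from a triangle `A₂ → H → A₁` with
`A₂ ∈ T₂^{≤0}` and `A₁ ∈ T₁^{≤0}[1]`, and the cones of its outer components are right orthogonal to
the glued aisle. By the four lemmas for the long exact sequences of `Hom(Z, -)`, so is the cone of
`H → E`.
-/

section Homological

variable {A : Type*} [Category A] [Abelian A] (F : C ⥤ A) [F.IsHomological] [F.ShiftSequence ℤ]
  (n₀ n₁ : ℤ) (h : n₀ + 1 = n₁)

include h in
lemma isZero_shift_obj₃_iff {T : Triangle C} (hT : T ∈ distTriang C) :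
    IsZero ((F.shift n₀).obj T.obj₃) ↔
      Epi ((F.shift n₀).map T.mor₁) ∧ Mono ((F.shift n₁).map T.mor₁) := by
  rw [F.homologySequence_epi_shift_map_mor₁_iff T hT,
    F.homologySequence_mono_shift_map_mor₁_iff T hT n₀ n₁ h]
  exact (F.homologySequence_exact₃ T hT n₀ n₁ h).isZero_X₂_iff

/-- The map of six-term exact sequences induced by a morphism of triangles, for use with the
four lemmas. -/
noncomputable def homologySequenceMap {T T' : Triangle C} (φ : T ⟶ T') :
    F.homologySequenceComposableArrows₅ T n₀ n₁ h ⟶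
      F.homologySequenceComposableArrows₅ T' n₀ n₁ h :=
  ComposableArrows.homMk₅ ((F.shift n₀).map φ.hom₁) ((F.shift n₀).map φ.hom₂)
    ((F.shift n₀).map φ.hom₃) ((F.shift n₁).map φ.hom₁) ((F.shift n₁).map φ.hom₂)
    ((F.shift n₁).map φ.hom₃)
    ((CommSq.mk φ.comm₁).map (F.shift n₀)).w
    ((CommSq.mk φ.comm₂).map (F.shift n₀)).w
    (F.homologySequenceδ_naturality T T' φ n₀ n₁ h).symm
    ((CommSq.mk φ.comm₁).map (F.shift n₁)).w
    ((CommSq.mk φ.comm₂).map (F.shift n₁)).w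

lemma isZero_shift_cone_hom₂ {T T' : Triangle C} (hT : T ∈ distTriang C)
    (hT' : T' ∈ distTriang C) (φ : T ⟶ T') {B₁ B₂ B₃ : C}
    {p₁ : T'.obj₁ ⟶ B₁} {q₁ : B₁ ⟶ T.obj₁⟦(1 : ℤ)⟧}
    {p₂ : T'.obj₂ ⟶ B₂} {q₂ : B₂ ⟶ T.obj₂⟦(1 : ℤ)⟧}
    {p₃ : T'.obj₃ ⟶ B₃} {q₃ : B₃ ⟶ T.obj₃⟦(1 : ℤ)⟧}
    (hφ₁ : Triangle.mk φ.hom₁ p₁ q₁ ∈ distTriang C)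
    (hφ₂ : Triangle.mk φ.hom₂ p₂ q₂ ∈ distTriang C)
    (hφ₃ : Triangle.mk φ.hom₃ p₃ q₃ ∈ distTriang C)
    (hB₁ : IsZero ((F.shift n₀).obj B₁)) (hB₃ : IsZero ((F.shift n₀).obj B₃)) :
    IsZero ((F.shift n₀).obj B₂) := by
  obtain ⟨epi₁, mono₁⟩ := (isZero_shift_obj₃_iff F n₀ (n₀ + 1) rfl hφ₁).1 hB₁
  obtain ⟨epi₃, mono₃⟩ := (isZero_shift_obj₃_iff F n₀ (n₀ + 1) rfl hφ₃).1 hB₃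
  have hrow := F.homologySequenceComposableArrows₅_exact T hT n₀ (n₀ + 1) rfl
  have hrow' := F.homologySequenceComposableArrows₅_exact T' hT' n₀ (n₀ + 1) rfl
  let ψ := homologySequenceMap F n₀ (n₀ + 1) rfl φ
  have epi₂ : Epi ((F.shift n₀).map φ.hom₂) :=
    Abelian.epi_of_epi_of_epi_of_mono'' (by lia : 0 + 3 ≤ 5) hrow hrow' ψ 0 1 2 3
      rfl rfl rfl rfl epi₁ epi₃ mono₁
  have mono₂ : Mono ((F.shift (n₀ + 1)).map φ.hom₂) :=
    Abelian.mono_of_epi_of_mono_of_mono'' (by lia : 2 + 3 ≤ 5) hrow hrow' ψ 2 3 4 5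
      rfl rfl rfl rfl epi₃ mono₁ mono₃
  exact (isZero_shift_obj₃_iff F n₀ (n₀ + 1) rfl hφ₂).2 ⟨epi₂, mono₂⟩

end Homological

section Preadditive

variable {D : Type*} [Category D]

lemma mem_rOrth_iff_isZero [Preadditive D] [HasShift D ℤ] {S : Set D} {Y : D} :
    Y ∈ rOrth S ↔
      ∀ X ∈ S, IsZero (((preadditiveCoyoneda.obj (Opposite.op X)).shift (0 : ℤ)).obj Y) := by
  refine forall₂_congr fun X _ => ?_
  rw [(((preadditiveCoyoneda.obj (Opposite.op X)).isoShiftZero ℤ).app Y).isZero_iff,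
    AddCommGrpCat.isZero_iff_subsingleton]
  exact ⟨fun h => ⟨fun f g => (h f).trans (h g).symm⟩, fun h f => h.elim f 0⟩

lemma rOrth_subset_rOrth [Preadditive D] {S S' : Set D} (h : S ⊆ S') : rOrth S' ⊆ rOrth S :=
  fun _ hY X hX => hY X (h hX)

lemma Compatible.subset_rOrth [Preadditive D] {S₂ le₁ le₂ : Set D}
    (h : Compatible S₂ le₁ le₂) : S₂ ∩ rOrth le₂ ⊆ rOrth le₁ :=
  fun Y hY X hX => h X hX Y hY

lemma shift_mem_shSet [HasShift D ℤ] {S : Set D} {X : D} (hX : X ∈ S) (n : ℤ) :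
    X⟦n⟧ ∈ shSet S n :=
  ⟨X, hX, ⟨Iso.refl _⟩⟩

lemma shSet_subset_shSet [HasShift D ℤ] {S S' : Set D} (h : S ⊆ S') (n : ℤ) :
    shSet S n ⊆ shSet S' n :=
  fun _ ⟨X, hX, e⟩ => ⟨X, h hX, e⟩

lemma shSet_rOrth_subset [Preadditive D] [HasShift D ℤ] (S : Set D) (n : ℤ)
    [(shiftFunctor D n).PreservesZeroMorphisms] :
    shSet (rOrth S) n ⊆ rOrth (shSet S n) := by
  rintro Y ⟨Y₀, hY₀, ⟨eY⟩⟩ X ⟨X₀, hX₀, ⟨eX⟩⟩ f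
  obtain ⟨f₀, hf₀⟩ := (shiftFunctor D n).map_surjective (eX.inv ≫ f ≫ eY.hom)
  rw [hY₀ X₀ hX₀ f₀, Functor.map_zero] at hf₀
  rw [← cancel_epi eX.inv, ← cancel_mono eY.hom, assoc, ← hf₀, comp_zero, zero_comp]

end Preadditive

lemma cone_hom₂_mem_rOrth {S : Set C} {T T' : Triangle C} (hT : T ∈ distTriang C)
    (hT' : T' ∈ distTriang C) (φ : T ⟶ T') {B₁ B₂ B₃ : C}
    {p₁ : T'.obj₁ ⟶ B₁} {q₁ : B₁ ⟶ T.obj₁⟦(1 : ℤ)⟧}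
    {p₂ : T'.obj₂ ⟶ B₂} {q₂ : B₂ ⟶ T.obj₂⟦(1 : ℤ)⟧}
    {p₃ : T'.obj₃ ⟶ B₃} {q₃ : B₃ ⟶ T.obj₃⟦(1 : ℤ)⟧}
    (hφ₁ : Triangle.mk φ.hom₁ p₁ q₁ ∈ distTriang C)
    (hφ₂ : Triangle.mk φ.hom₂ p₂ q₂ ∈ distTriang C)
    (hφ₃ : Triangle.mk φ.hom₃ p₃ q₃ ∈ distTriang C)
    (hB₁ : B₁ ∈ rOrth S) (hB₃ : B₃ ∈ rOrth S) : B₂ ∈ rOrth S := by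
  rw [mem_rOrth_iff_isZero] at hB₁ hB₃ ⊢
  exact fun X hX => isZero_shift_cone_hom₂ _ 0 hT hT' φ hφ₁ hφ₂ hφ₃
    (hB₁ X hX) (hB₃ X hX)

lemma exists_comp_shift_map_mor₁ {T : Triangle C} (hT : T ∈ distTriang C) {X : C}
    (x : X ⟶ T.obj₂⟦(1 : ℤ)⟧) (hx : x ≫ T.mor₂⟦(1 : ℤ)⟧' = 0) :
    ∃ y : X ⟶ T.obj₁⟦(1 : ℤ)⟧, x = y ≫ T.mor₁⟦(1 : ℤ)⟧' := by
  obtain ⟨y, hy⟩ : ∃ y : X ⟶ T.obj₁⟦(1 : ℤ)⟧, x = y ≫ (-T.mor₁⟦(1 : ℤ)⟧') :=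
    Triangle.coyoneda_exact₁ _ (rot_of_distTriang _ hT) x hx
  exact ⟨-y, by rw [hy, Preadditive.comp_neg, Preadditive.neg_comp]⟩

lemma rOrth_inter_rOrth_subset (S S' : Set C) : rOrth S ∩ rOrth S' ⊆ rOrth (star S S') := by
  rintro Y ⟨hS, hS'⟩ Z ⟨A, hA, B, hB, f, g, h, hT⟩ t
  obtain ⟨y, rfl⟩ : ∃ y : B ⟶ Y, t = g ≫ y := Triangle.yoneda_exact₂ _ hT t (hS A hA _)
  rw [hS' B hB y, comp_zero]

section Extensions

variable {X Y X' Y' : Set C}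

lemma star_subset_star (hX : X ⊆ X') (hY : Y ⊆ Y') : star X Y ⊆ star X' Y' :=
  fun _ ⟨A, hA, B, hB, T⟩ => ⟨A, hX hA, B, hY hB, T⟩

lemma mem_star_of_iso {Z Z' : C} (e : Z ≅ Z') (hZ : Z ∈ star X Y) : Z' ∈ star X Y := by
  obtain ⟨A, hA, B, hB, f, g, h, hT⟩ := hZ
  refine ⟨A, hA, B, hB, f ≫ e.hom, e.inv ≫ g, h, isomorphic_distinguished _ hT _ ?_⟩
  exact Triangle.isoMk _ _ (Iso.refl A) e.symm (Iso.refl B)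
    (by simp [Triangle.mk]) (by simp [Triangle.mk]) (by simp [Triangle.mk])

lemma shSet_star_subset (X Y : Set C) (n : ℤ) :
    shSet (star X Y) n ⊆ star (shSet X n) (shSet Y n) := by
  rintro Z' ⟨Z, ⟨A, hA, B, hB, f, g, h, hT⟩, ⟨e⟩⟩
  exact mem_star_of_iso e.symm ⟨A⟦n⟧, shift_mem_shSet hA n, B⟦n⟧, shift_mem_shSet hB n,
    _, _, _, Triangle.shift_distinguished _ hT n⟩

/-- With the octahedral axiom, the `3 × 3` lemma would give `star Y Y'` as the last factor; without
it, the four lemmas still show that the cone is orthogonal to `S`. -/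
theorem star_star_subset {S : Set C} (hXY : shSet Y 1 ⊆ rOrth X')
    (hY : Y ⊆ rOrth S) (hY' : Y' ⊆ rOrth S) :
    star (star X Y) (star X' Y') ⊆ star (star X X') (rOrth S) := by
  rintro E ⟨E₂, ⟨A₂, hA₂, B₂, hB₂, i₂, p₂, q₂, hT₂⟩, E₁, ⟨A₁, hA₁, B₁, hB₁, i₁, p₁, q₁, hT₁⟩,
    f, g, h, hT⟩
  obtain ⟨k, hk⟩ : ∃ k : A₁ ⟶ A₂⟦(1 : ℤ)⟧, i₁ ≫ h = k ≫ i₂⟦(1 : ℤ)⟧' :=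
    exists_comp_shift_map_mor₁ hT₂ _ (hXY (shift_mem_shSet hB₂ 1) A₁ hA₁ _)
  obtain ⟨H, u, v, hH⟩ := distinguished_cocone_triangle₂ k
  obtain ⟨m, hm₁, hm₂⟩ := complete_distinguished_triangle_morphism₂ _ _ hH hT i₂ i₁ hk.symm
  obtain ⟨K, p, q, hK⟩ := distinguished_cocone_triangle m
  let φ : Triangle.mk u v k ⟶ Triangle.mk f g h :=
    { hom₁ := i₂, hom₂ := m, hom₃ := i₁, comm₁ := hm₁, comm₂ := hm₂, comm₃ := hk.symm }
  exact ⟨H, ⟨A₂, hA₂, A₁, hA₁, u, v, k, hH⟩, K,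
    cone_hom₂_mem_rOrth hH hT φ hT₂ hK hT₁ (hY hB₂) (hY' hB₁), m, p, q, hK⟩

end Extensions

section Gluing

variable {S S₁ S₂ le le₁ le₂ : Set C}

lemma IsTriangulatedSub.shSet_subset (h : IsTriangulatedSub S) (n : ℤ) : shSet S n ⊆ S :=
  fun _ ⟨X, hX, ⟨e⟩⟩ => h.isoClosed e.symm (h.shift n X hX)

lemma IsTriangulatedSub.subset_shSet (h : IsTriangulatedSub S) (n : ℤ) : S ⊆ shSet S n :=
  fun X hX => ⟨X⟦-n⟧, h.shift (-n) X hX, ⟨(shiftNegShift X n).symm⟩⟩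

lemma IsTStructureOn.shSet_subset (h : IsTStructureOn S le) : shSet le 1 ⊆ le :=
  fun _ ⟨X, hX, ⟨e⟩⟩ => h.isoClosed e.symm (h.shift X hX)

lemma IsTStructureOn.subset_star (h : IsTStructureOn S le) : S ⊆ star le (S ∩ rOrth le) :=
  fun E hE =>
    let ⟨A, B, hA, hB, T⟩ := h.exists_triangle E hE
    ⟨A, hA, B, hB, T⟩

lemma IsTStructureOn.subset_star_shSet (h : IsTStructureOn S le) (hS : IsTriangulatedSub S)
    (n : ℤ) : S ⊆ star (shSet le n) (shSet (S ∩ rOrth le) n) :=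
  calc S ⊆ shSet S n := hS.subset_shSet n
    _ ⊆ shSet (star le (S ∩ rOrth le)) n := shSet_subset_shSet h.subset_star n
    _ ⊆ star (shSet le n) (shSet (S ∩ rOrth le) n) := shSet_star_subset _ _ n

lemma IsSOD.mem_star (h : IsSOD S₁ S₂) (E : C) : E ∈ star S₂ S₁ :=
  let ⟨A, B, hA, hB, T⟩ := h.exists_triangle E
  ⟨A, hA, B, hB, T⟩

lemma IsSOD.subset_rOrth (h : IsSOD S₁ S₂) : S₁ ⊆ rOrth S₂ :=
  fun Y hY X hX => h.orth X hX Y hY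

lemma Compatible.subset_rOrth_glued (h : Compatible S₂ le₁ le₂) (h₁ : shSet le₁ 1 ⊆ le₁) :
    S₂ ∩ rOrth le₂ ⊆ rOrth (glued le₁ le₂) :=
  fun _ hY => rOrth_inter_rOrth_subset _ _
    ⟨hY.2, rOrth_subset_rOrth h₁ (h.subset_rOrth hY)⟩

lemma IsSOD.shSet_subset_rOrth_glued (h : IsSOD S₁ S₂) (h₂ : le₂ ⊆ S₂) :
    shSet (S₁ ∩ rOrth le₁) 1 ⊆ rOrth (glued le₁ le₂) := by
  intro Y hY
  have hY₁ : Y ∈ S₁ := h.sub₁.shSet_subset 1 (shSet_subset_shSet Set.inter_subset_left 1 hY)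
  exact rOrth_inter_rOrth_subset _ _ ⟨rOrth_subset_rOrth h₂ (h.subset_rOrth hY₁),
    shSet_rOrth_subset _ 1 (shSet_subset_shSet Set.inter_subset_right 1 hY)⟩

lemma shSet_glued_subset (h₁ : shSet le₁ 1 ⊆ le₁) (h₂ : shSet le₂ 1 ⊆ le₂) :
    shSet (glued le₁ le₂) 1 ⊆ glued le₁ le₂ :=
  (shSet_star_subset _ _ 1).trans
    (star_subset_star h₂ (shSet_subset_shSet h₁ 1))

lemma mem_star_glued_rOrth (hSOD : IsSOD S₁ S₂) (h₁ : IsTStructureOn S₁ le₁)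
    (h₂ : IsTStructureOn S₂ le₂) (hcomp : Compatible S₂ le₁ le₂) (E : C) :
    E ∈ star (glued le₁ le₂) (rOrth (glued le₁ le₂)) := by
  have hE : E ∈ star (star le₂ (S₂ ∩ rOrth le₂))
      (star (shSet le₁ 1) (shSet (S₁ ∩ rOrth le₁) 1)) :=
    star_subset_star h₂.subset_star (h₁.subset_star_shSet hSOD.sub₁ 1) (hSOD.mem_star E)
  have hinterchange : shSet (S₂ ∩ rOrth le₂) 1 ⊆ rOrth (shSet le₁ 1) :=
    (shSet_subset_shSet hcomp.subset_rOrth 1).trans (shSet_rOrth_subset le₁ 1)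
  exact star_star_subset hinterchange (hcomp.subset_rOrth_glued h₁.shSet_subset)
    (hSOD.shSet_subset_rOrth_glued h₂.subset) hE

end Gluing

/-- Theorem 2.7, first part: given a semiorthogonal decomposition
`C = ⟨S₁, S₂⟩` and compatible t-structures `le₁` on `S₁` and `le₂` on `S₂`, the
full subcategory `T^{≤0} := T₂^{≤0} * (T₁^{≤0}[1])` is a t-structure on `C`. -/
theorem glued_isTStructure {C : Type u} [Category.{v} C] [HasZeroObject C] [Preadditive C]
    [HasShift C ℤ] [∀ n : ℤ, (shiftFunctor C n).Additive] [Pretriangulated C]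
    (S₁ S₂ le₁ le₂ : Set C) (hSOD : IsSOD S₁ S₂)
    (h₁ : IsTStructureOn S₁ le₁) (h₂ : IsTStructureOn S₂ le₂)
    (hcomp : Compatible S₂ le₁ le₂) :
    IsTStructureOn Set.univ (glued le₁ le₂) := by
  refine ⟨Set.subset_univ _, mem_star_of_iso, fun Z hZ => ?_, fun E _ => ?_⟩
  · exact shSet_glued_subset h₁.shSet_subset h₂.shSet_subset (shift_mem_shSet hZ 1)
  · obtain ⟨A, hA, B, hB, T⟩ := mem_star_glued_rOrth hSOD h₁ h₂ hcomp E
    exact ⟨A, B, hA, ⟨Set.mem_univ B, hB⟩, T⟩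

end Paper
end

section
/- Let T be a triangulated category with a semiorthogonal decomposition T = ⟨T₁, T₂⟩, and let T₁^{≤0} and T₂^{≤0} be t-structures on T₁ and T₂ respectively that are compatible in T, so that T^{≤0} := T₂^{≤0} * (T₁^{≤0}[1]) is a t-structure on T. Let A₁, A₂ and A be the hearts of T₁^{≤0}, T₂^{≤0} and T^{≤0} respectively. Then A = A₂ * (A₁[1]). -/
open CategoryTheory Category Limits Pretriangulated

namespace Paper

universe v u

variable {C : Type u} [Category.{v} C] [HasZeroObject C] [Preadditive C]
  [HasShift C ℤ] [∀ n : ℤ, (shiftFunctor C n).Additive] [Pretriangulated C]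

/-!
The heart of an aisle `P` is `P ∩ P[1]^⊥`, whatever the ambient subcategory is. For
`Q = P₂ * P₁[1]` one has `Q[1]^⊥ = P₂[1]^⊥ ∩ P₁[2]^⊥`, and the two conditions can be imposed on
`P₂ * P₁[1]` one after the other. By semiorthogonality there are no nonzero maps from `P₂[1]` to
`P₁` or `P₁[1]`, so the first condition cuts `P₂` down to its heart `A₂`. By compatibility there
are none from `P₁[2]` to `A₂` or `A₂[1]`, so the second one cuts `P₁[1]` down to the shifted
heart of `P₁`.
-/

open ZeroObject

section Orthogonal

variable {C : Type u} [Category.{v} C] [Preadditive C]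

lemma rOrth_antitone {X Y : Set C} (h : X ⊆ Y) : rOrth Y ⊆ rOrth X :=
  fun _ hZ A hA => hZ A (h hA)

lemma mem_rOrth_of_iso {X : Set C} {Y Y' : C} (e : Y ≅ Y') (hY : Y ∈ rOrth X) :
    Y' ∈ rOrth X := fun A hA f => by
  rw [← cancel_mono e.inv, hY A hA (f ≫ e.inv), zero_comp]

lemma compatible_iff_subset_rOrth {S P₁ P₂ : Set C} :
    Compatible S P₁ P₂ ↔ S ∩ rOrth P₂ ⊆ rOrth P₁ :=
  ⟨fun h Y hY X hX => h X hX Y hY, fun h X hX _ hY => h hY X hX⟩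

end Orthogonal

section Shift

variable {C : Type u} [Category.{v} C] [HasShift C ℤ]

lemma shift_mem_shSet_s3 {X : Set C} {Y : C} (hY : Y ∈ X) (n : ℤ) : Y⟦n⟧ ∈ shSet X n :=
  ⟨Y, hY, ⟨Iso.refl _⟩⟩

lemma shSet_mono {X Y : Set C} (h : X ⊆ Y) (n : ℤ) : shSet X n ⊆ shSet Y n :=
  fun _ ⟨A, hA, e⟩ => ⟨A, h hA, e⟩

lemma mem_shSet_of_shift_neg_mem {X : Set C} {Y : C} {n : ℤ} (h : Y⟦-n⟧ ∈ X) : Y ∈ shSet X n :=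
  ⟨Y⟦-n⟧, h, ⟨((shiftEquiv C n).counitIso.app Y).symm⟩⟩

lemma shSet_univ (n : ℤ) : shSet (Set.univ : Set C) n = Set.univ :=
  Set.eq_univ_of_forall fun _ => mem_shSet_of_shift_neg_mem (Set.mem_univ _)

lemma shSet_subset_self {X : Set C} {n : ℤ} (hiso : ∀ {Y Z : C}, (Y ≅ Z) → Y ∈ X → Z ∈ X)
    (hshift : ∀ Y ∈ X, Y⟦n⟧ ∈ X) : shSet X n ⊆ X :=
  fun _ ⟨A, hA, ⟨e⟩⟩ => hiso e.symm (hshift A hA)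

lemma shSet_zero {X : Set C} (hiso : ∀ {Y Z : C}, (Y ≅ Z) → Y ∈ X → Z ∈ X) :
    shSet X 0 = X :=
  Set.Subset.antisymm
    (shSet_subset_self hiso fun Y hY => hiso ((shiftFunctorZero C ℤ).app Y).symm hY)
    fun Y hY => ⟨Y, hY, ⟨((shiftFunctorZero C ℤ).app Y).symm⟩⟩

end Shift

section ShiftOrthogonal

variable {C : Type u} [Category.{v} C] [Preadditive C] [HasShift C ℤ]

lemma mem_rOrth_shSet {X : Set C} {Y : C} {n : ℤ} :
    Y ∈ rOrth (shSet X n) ↔ Y⟦-n⟧ ∈ rOrth X := by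
  let adj := (shiftEquiv C n).toAdjunction
  constructor
  · intro h A hA f
    have h' := h _ (shift_mem_shSet_s3 hA n)
    exact (adj.homEquiv A Y).symm.injective ((h' _).trans (h' _).symm)
  · rintro h B ⟨A, hA, ⟨e⟩⟩ f
    have hf : e.inv ≫ f = 0 :=
      (adj.homEquiv A Y).injective ((h A hA _).trans (h A hA _).symm)
    rw [← cancel_epi e.inv, hf, comp_zero]

lemma shift_mem_rOrth_shSet {X : Set C} {Y : C} {n : ℤ} :
    Y⟦n⟧ ∈ rOrth (shSet X n) ↔ Y ∈ rOrth X := by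
  let e : Y ≅ Y⟦n⟧⟦-n⟧ := (shiftEquiv C n).unitIso.app Y
  exact mem_rOrth_shSet.trans ⟨mem_rOrth_of_iso e.symm, mem_rOrth_of_iso e⟩

lemma shSet_inter_rOrth (X Y : Set C) (n : ℤ) :
    shSet (X ∩ rOrth Y) n = shSet X n ∩ rOrth (shSet Y n) := by
  ext Z
  constructor
  · rintro ⟨A, ⟨hA, hAY⟩, ⟨e⟩⟩
    exact ⟨⟨A, hA, ⟨e⟩⟩, mem_rOrth_of_iso e.symm (shift_mem_rOrth_shSet.2 hAY)⟩
  · rintro ⟨⟨A, hA, ⟨e⟩⟩, hZ⟩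
    exact ⟨A, ⟨hA, shift_mem_rOrth_shSet.1 (mem_rOrth_of_iso e hZ)⟩, ⟨e⟩⟩

lemma shSet_subset_rOrth_shSet {X Y : Set C} (h : X ⊆ rOrth Y) (n : ℤ) :
    shSet X n ⊆ rOrth (shSet Y n) := by
  rw [← Set.inter_eq_left, ← shSet_inter_rOrth, Set.inter_eq_left.2 h]

lemma heartOn_eq_inter_rOrth {S P : Set C}
    (hiso : ∀ {X Y : C}, (X ≅ Y) → X ∈ P → Y ∈ P) (hP : P ⊆ shSet S 1) :
    heartOn S P = P ∩ rOrth (shSet P 1) := by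
  rw [heartOn, leN, geN, neg_zero, sub_zero, shSet_zero hiso, shSet_inter_rOrth,
    ← Set.inter_assoc, Set.inter_eq_left.2 hP]

lemma Compatible.heartOn_subset_rOrth {S P₁ P₂ : Set C} (h : Compatible S P₁ P₂) :
    heartOn S P₂ ⊆ rOrth (shSet P₁ 1) :=
  Set.inter_subset_right.trans
    (shSet_subset_rOrth_shSet (compatible_iff_subset_rOrth.1 h) _)

end ShiftOrthogonal

section ShiftStable

variable {C : Type u} [Category.{v} C] [HasZeroObject C] [HasShift C ℤ]

/-- A pointed, replete class `P` of objects stable under `[1]` and contained in `S[1]`: what is left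
of a t-structure on `S` with aisle `P` when truncation triangles are not assumed to exist and
`S` is an arbitrary class of objects. When `S` is stable under `[-1]`, the last condition follows
from `P ⊆ S`. -/
structure IsShiftStableOn (S P : Set C) : Prop where
  zero_mem : (0 : C) ∈ P
  isoClosed : ∀ {X Y : C}, (X ≅ Y) → X ∈ P → Y ∈ P
  shift : ∀ X ∈ P, X⟦(1 : ℤ)⟧ ∈ P
  subset_shSet : P ⊆ shSet S 1

lemma IsShiftStableOn.shSet_subset {S P : Set C} (h : IsShiftStableOn S P) : shSet P 1 ⊆ P :=
  shSet_subset_self h.isoClosed h.shift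

variable [Preadditive C]

lemma zero_mem_shSet {X : Set C} (hX : (0 : C) ∈ X) (n : ℤ) : (0 : C) ∈ shSet X n :=
  ⟨0, hX, ⟨(shiftFunctor C n).mapZeroObject.symm⟩⟩

lemma IsShiftStableOn.heartOn_eq {S P : Set C} (h : IsShiftStableOn S P) :
    heartOn S P = P ∩ rOrth (shSet P 1) :=
  heartOn_eq_inter_rOrth h.isoClosed h.subset_shSet

end ShiftStable

lemma mem_star_of_iso_s3 {X Y : Set C} {E E' : C} (e : E ≅ E') (hE : E ∈ star X Y) :
    E' ∈ star X Y := by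
  obtain ⟨A, hA, B, hB, f, g, h, hT⟩ := hE
  refine ⟨A, hA, B, hB, f ≫ e.hom, e.inv ≫ g, h, isomorphic_distinguished _ hT _ ?_⟩
  exact Triangle.isoMk _ _ (Iso.refl A) e.symm (Iso.refl B)
    (show (f ≫ e.hom) ≫ e.inv = 𝟙 A ≫ f by simp)
    (show (e.inv ≫ g) ≫ 𝟙 B = e.inv ≫ g by simp)
    (show h ≫ (shiftFunctor C (1 : ℤ)).map (𝟙 A) = 𝟙 B ≫ h by simp)

lemma subset_star_left (X : Set C) {Y : Set C} (hY : (0 : C) ∈ Y) : X ⊆ star X Y :=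
  fun A hA => ⟨A, hA, 0, hY, 𝟙 A, 0, 0, contractible_distinguished A⟩

lemma subset_star_right {X : Set C} (hX : (0 : C) ∈ X) (Y : Set C) : Y ⊆ star X Y :=
  fun B hB => ⟨0, hX, B, hB, 0, 𝟙 B, 0, contractible_distinguished₁ B⟩

lemma rOrth_star {X Y : Set C} (hX : (0 : C) ∈ X) (hY : (0 : C) ∈ Y) :
    rOrth (star X Y) = rOrth X ∩ rOrth Y := by
  refine Set.Subset.antisymm (Set.subset_inter (rOrth_antitone (subset_star_left X hY))
    (rOrth_antitone (subset_star_right hX Y))) ?_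
  rintro Z ⟨hZX, hZY⟩ E ⟨A, hA, B, hB, f, g, h, hT⟩ k
  obtain ⟨l, rfl⟩ := Triangle.yoneda_exact₂ _ hT k (hZX A hA _)
  exact (congrArg (g ≫ ·) (hZY B hB l)).trans comp_zero

lemma rOrth_shSet_star {X Y : Set C} (hX : (0 : C) ∈ X) (hY : (0 : C) ∈ Y) (n : ℤ) :
    rOrth (shSet (star X Y) n) = rOrth (shSet X n) ∩ rOrth (shSet Y n) := by
  ext Z
  simp only [Set.mem_inter_iff, mem_rOrth_shSet, rOrth_star hX hY]

lemma mem_rOrth_obj₂_iff_obj₃ {U : Set C} {T : Triangle C} (hT : T ∈ distTriang C)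
    (h₁ : T.obj₁ ∈ rOrth U) (h₁' : T.obj₁⟦(1 : ℤ)⟧ ∈ rOrth U) :
    T.obj₂ ∈ rOrth U ↔ T.obj₃ ∈ rOrth U := by
  constructor
  · intro h₂ X hX f
    obtain ⟨l, rfl⟩ := Triangle.coyoneda_exact₃ _ hT f (h₁' X hX _)
    rw [h₂ X hX l, zero_comp]
  · intro h₃ X hX f
    obtain ⟨l, rfl⟩ := Triangle.coyoneda_exact₂ _ hT f (h₃ X hX _)
    rw [h₁ X hX l, zero_comp]

lemma mem_rOrth_obj₁_iff_obj₂ {U : Set C} {T : Triangle C} (hT : T ∈ distTriang C)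
    (h₃ : T.obj₃ ∈ rOrth U) (h₃' : T.obj₃⟦(-1 : ℤ)⟧ ∈ rOrth U) :
    T.obj₁ ∈ rOrth U ↔ T.obj₂ ∈ rOrth U :=
  mem_rOrth_obj₂_iff_obj₃ (inv_rot_of_distTriang _ hT) h₃'
    (mem_rOrth_of_iso ((shiftEquiv C (1 : ℤ)).counitIso.app T.obj₃).symm h₃)

lemma star_inter_rOrth_left {X Y U : Set C} (hY : Y ⊆ rOrth U) (hY' : Y ⊆ rOrth (shSet U 1)) :
    star X Y ∩ rOrth U = star (X ∩ rOrth U) Y := by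
  ext E
  constructor
  · rintro ⟨⟨A, hA, B, hB, f, g, h, hT⟩, hE⟩
    have hAU := (mem_rOrth_obj₁_iff_obj₂ hT (hY hB) (mem_rOrth_shSet.1 (hY' hB))).2 hE
    exact ⟨A, ⟨hA, hAU⟩, B, hB, f, g, h, hT⟩
  · rintro ⟨A, ⟨hA, hAU⟩, B, hB, f, g, h, hT⟩
    have hE := (mem_rOrth_obj₁_iff_obj₂ hT (hY hB) (mem_rOrth_shSet.1 (hY' hB))).1 hAU
    exact ⟨⟨A, hA, B, hB, f, g, h, hT⟩, hE⟩

lemma star_inter_rOrth_right {X Y U : Set C} (hX : X ⊆ rOrth U) (hX' : shSet X 1 ⊆ rOrth U) :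
    star X Y ∩ rOrth U = star X (Y ∩ rOrth U) := by
  ext E
  constructor
  · rintro ⟨⟨A, hA, B, hB, f, g, h, hT⟩, hE⟩
    have hBU := (mem_rOrth_obj₂_iff_obj₃ hT (hX hA) (hX' (shift_mem_shSet_s3 hA 1))).1 hE
    exact ⟨A, hA, B, ⟨hB, hBU⟩, f, g, h, hT⟩
  · rintro ⟨A, hA, B, ⟨hB, hBU⟩, f, g, h, hT⟩
    have hE := (mem_rOrth_obj₂_iff_obj₃ hT (hX hA) (hX' (shift_mem_shSet_s3 hA 1))).2 hBU
    exact ⟨⟨A, hA, B, hB, f, g, h, hT⟩, hE⟩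

lemma IsTStructureOn.zero_mem {S P : Set C} (h : IsTStructureOn S P) (hS : (0 : C) ∈ S) :
    (0 : C) ∈ P := by
  obtain ⟨A, B, hA, hB, f, g, δ, hT⟩ := h.exists_triangle 0 hS
  have hδ : IsIso δ := (Triangle.isZero₂_iff_isIso₃ _ hT).1 (isZero_zero C)
  have hB₀ : IsZero B := (IsZero.iff_id_eq_zero B).2 <| by
    rw [← IsIso.hom_inv_id δ, hB.2 _ (h.shift A hA) (inv δ), comp_zero]
  have hf : IsIso f := (Triangle.isZero₃_iff_isIso₁ _ hT).1 hB₀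
  exact h.isoClosed (asIso f) hA

lemma IsTStructureOn.isShiftStableOn {S P : Set C} (h : IsTStructureOn S P)
    (hS : IsTriangulatedSub S) : IsShiftStableOn S P where
  zero_mem := h.zero_mem (hS.zero 0 (isZero_zero C))
  isoClosed := h.isoClosed
  shift := h.shift
  subset_shSet := fun X hX => mem_shSet_of_shift_neg_mem (hS.shift (-1) X (h.subset hX))

lemma heartOn_univ_glued {P₁ P₂ : Set C} (h₁ : (0 : C) ∈ P₁) (h₂ : (0 : C) ∈ P₂) :
    heartOn Set.univ (glued P₁ P₂) =
      glued P₁ P₂ ∩ (rOrth (shSet P₂ 1) ∩ rOrth (shSet (shSet P₁ 1) 1)) := by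
  have hsub : star P₂ (shSet P₁ 1) ⊆ shSet Set.univ 1 := by
    rw [shSet_univ]
    exact Set.subset_univ _
  rw [glued, heartOn_eq_inter_rOrth mem_star_of_iso_s3 hsub,
    rOrth_shSet_star h₂ (zero_mem_shSet h₁ 1)]

theorem glued_heart_general {S₁ S₂ P₁ P₂ : Set C} (h₁ : IsShiftStableOn S₁ P₁)
    (h₂ : IsShiftStableOn S₂ P₂) (horth : P₁ ⊆ rOrth P₂) (hcomp : Compatible S₂ P₁ P₂) :
    heartOn Set.univ (glued P₁ P₂) = star (heartOn S₂ P₂) (shSet (heartOn S₁ P₁) 1) := by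
  have horth' : P₁ ⊆ rOrth (shSet P₂ 1) := horth.trans (rOrth_antitone h₂.shSet_subset)
  have hheart : heartOn S₂ P₂ ⊆ rOrth (shSet P₁ 1) := hcomp.heartOn_subset_rOrth
  have hheart' : heartOn S₂ P₂ ⊆ rOrth (shSet (shSet P₁ 1) 1) :=
    hheart.trans (rOrth_antitone (shSet_mono h₁.shSet_subset 1))
  calc heartOn Set.univ (glued P₁ P₂)
    _ = star P₂ (shSet P₁ 1) ∩ (rOrth (shSet P₂ 1) ∩ rOrth (shSet (shSet P₁ 1) 1)) :=
      heartOn_univ_glued h₁.zero_mem h₂.zero_mem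
    _ = star (heartOn S₂ P₂) (shSet P₁ 1) ∩ rOrth (shSet (shSet P₁ 1) 1) := by
      rw [← Set.inter_assoc, h₂.heartOn_eq, star_inter_rOrth_left
        (shSet_subset_rOrth_shSet horth 1) (shSet_subset_rOrth_shSet horth' 1)]
    _ = star (heartOn S₂ P₂) (shSet P₁ 1 ∩ rOrth (shSet (shSet P₁ 1) 1)) :=
      star_inter_rOrth_right hheart' (shSet_subset_rOrth_shSet hheart 1)
    _ = star (heartOn S₂ P₂) (shSet (heartOn S₁ P₁) 1) := by
      rw [h₁.heartOn_eq, shSet_inter_rOrth]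

/-- Theorem 2.7, item 2: the heart of the glued t-structure
`T₂^{≤0} * (T₁^{≤0}[1])` is `A₂ * (A₁[1])`, where `A₁`, `A₂` are the hearts of the
two given compatible t-structures. -/
theorem glued_heart {C : Type u} [Category.{v} C] [HasZeroObject C] [Preadditive C]
    [HasShift C ℤ] [∀ n : ℤ, (shiftFunctor C n).Additive] [Pretriangulated C]
    (S₁ S₂ le₁ le₂ : Set C) (hSOD : IsSOD S₁ S₂)
    (h₁ : IsTStructureOn S₁ le₁) (h₂ : IsTStructureOn S₂ le₂)
    (hcomp : Compatible S₂ le₁ le₂) :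
    heartOn Set.univ (glued le₁ le₂) = star (heartOn S₂ le₂) (shSet (heartOn S₁ le₁) 1) :=
  glued_heart_general (h₁.isShiftStableOn hSOD.sub₁) (h₂.isShiftStableOn hSOD.sub₂)
    (fun Y hY X hX => hSOD.orth X (h₂.subset hX) Y (h₁.subset hY)) hcomp

end Paper
end

section
/- Let F : D → T be a fully faithful exact functor between triangulated categories, and let A be the heart of a bounded t-structure on T such that every object of A lies in the essential image of F. Then F is essentially surjective, hence an exact equivalence. -/
/-! The essential image of a full exact functor is closed under shifts and under extensions:
fullness lets the connecting morphism of a triangle with outer terms in the image be lifted to the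
source, where a cone of the lift provides a preimage of the middle term. A bounded t-structure
exhibits every object as an iterated extension of shifts of objects of its heart. -/

open CategoryTheory Category Limits Pretriangulated
namespace Paper
universe v u

variable {C : Type u} [Category.{v} C] [HasZeroObject C] [Preadditive C]
  [HasShift C ℤ] [∀ n : ℤ, (shiftFunctor C n).Additive] [Pretriangulated C]

/-- Bridgeland's characterization of a heart of a bounded t-structure on `C`:
a full additive subcategory (closed under isomorphisms, zero objects and finite
direct sums) with no negative self-extensions, such that every object admits a
filtration with shifted-heart factors, for strictly decreasing shifts. -/
structure IsHeart [HasBinaryBiproducts C] (H : Set C) : Prop where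
  isoClosed : ∀ {X Y : C}, (X ≅ Y) → X ∈ H → Y ∈ H
  zero : ∀ X : C, IsZero X → X ∈ H
  sums : ∀ {X Y : C}, X ∈ H → Y ∈ H → (X ⊞ Y) ∈ H
  neg_vanish : ∀ A ∈ H, ∀ B ∈ H, ∀ n : ℤ, n < 0 → ∀ f : A ⟶ B⟦n⟧, f = 0
  filtration : ∀ E : C, ∃ (m : ℕ) (obj : Fin (m+1) → C)
    (map : ∀ i : Fin m, obj i.castSucc ⟶ obj i.succ) (k : Fin m → ℤ),
    IsZero (obj 0) ∧ obj (Fin.last m) = E ∧ (∀ i j : Fin m, i < j → k j < k i) ∧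
    ∀ i : Fin m, ∃ (A : C) (_ : A ∈ H) (g : obj i.succ ⟶ A⟦k i⟧)
      (h : A⟦k i⟧ ⟶ (obj i.castSucc)⟦(1:ℤ)⟧),
      Triangle.mk (map i) g h ∈ distTriang C

/-- `F` is a triangulated (exact) functor with respect to the commutation-with-shift
data `cs`. -/
def IsTriangulatedWith {D : Type*} [Category D] [HasZeroObject D] [Preadditive D]
    [HasShift D ℤ] [∀ n : ℤ, (shiftFunctor D n).Additive] [Pretriangulated D]
    (F : C ⥤ D) (cs : F.CommShift ℤ) : Prop := by
  letI := cs; exact F.IsTriangulated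

/-- The objects built from `0` by finitely many extensions with factors in `P`: the sense in which
the shifts of a heart generate. Factors are added one at a time, as third terms of distinguished
triangles, since without the octahedral axiom other bracketings need not give the same objects. -/
inductive IteratedExtension (P : ObjectProperty C) : ObjectProperty C
  | of_isZero {X : C} (hX : IsZero X) : IteratedExtension P X
  | of_distTriang {T : Triangle C} (hT : T ∈ distTriang C) (h₁ : IteratedExtension P T.obj₁)
      (h₃ : P T.obj₃) : IteratedExtension P T.obj₂

lemma iteratedExtension_le {P Q : ObjectProperty C} [Q.ContainsZero] [Q.IsTriangulatedClosed₂]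
    [Q.IsClosedUnderIsomorphisms] (hPQ : P ≤ Q) : IteratedExtension P ≤ Q := by
  intro X hX
  induction hX with
  | of_isZero hX => exact Q.prop_of_isZero hX
  | of_distTriang hT _ h₃ ih => exact Q.ext_of_isTriangulatedClosed₂ _ hT ih (hPQ _ h₃)

lemma iteratedExtension_of_filtration {P : ObjectProperty C} {m : ℕ} {obj : Fin (m + 1) → C}
    (map : ∀ i : Fin m, obj i.castSucc ⟶ obj i.succ) (h_zero : IsZero (obj 0))
    (h_cone : ∀ i : Fin m, ∃ (B : C) (_ : P B) (g : obj i.succ ⟶ B)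
      (h : B ⟶ (obj i.castSucc)⟦(1 : ℤ)⟧), Triangle.mk (map i) g h ∈ distTriang C)
    (i : Fin (m + 1)) : IteratedExtension P (obj i) := by
  induction i using Fin.induction with
  | zero => exact .of_isZero h_zero
  | succ i ih =>
    obtain ⟨B, hB, g, h, hT⟩ := h_cone i
    exact .of_distTriang hT ih hB

lemma IsHeart.iteratedExtension_shiftClosure_eq_top [HasBinaryBiproducts C] {H : Set C}
    (hH : IsHeart H) :
    IteratedExtension (ObjectProperty.shiftClosure (· ∈ H) ℤ) = ⊤ := by
  refine top_unique fun E _ ↦ ?_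
  obtain ⟨m, obj, map, k, h_zero, rfl, -, h_cone⟩ := hH.filtration E
  refine iteratedExtension_of_filtration map h_zero (fun i ↦ ?_) (Fin.last m)
  obtain ⟨A, hA, g, h, hT⟩ := h_cone i
  exact ⟨A⟦k i⟧, ⟨A, k i, Iso.refl _, hA⟩, g, h, hT⟩

theorem essSurj_of_heart_in_image_general {D : Type*} [Category D] [HasZeroObject D]
    [Preadditive D] [HasShift D ℤ] [∀ n : ℤ, (shiftFunctor D n).Additive] [Pretriangulated D]
    (F : D ⥤ C) [F.CommShift ℤ] [F.IsTriangulated] [F.Full] {P : ObjectProperty C}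
    (hP : IteratedExtension (P.shiftClosure ℤ) = ⊤) (hPF : P ≤ F.essImage) :
    F.EssSurj where
  mem_essImage X :=
    iteratedExtension_le ((P.shiftClosure_le_iff F.essImage).2 hPF) X (hP.ge X trivial)

/-- a fully faithful exact functor `F : D ⥤ T` such that every object
of the heart of a bounded t-structure on `T` lies in the essential image of `F` is
essentially surjective, hence an exact equivalence. -/
theorem essSurj_of_heart_in_image {D : Type*} [Category D] [HasZeroObject D]
    [Preadditive D] [HasShift D ℤ] [∀ n : ℤ, (shiftFunctor D n).Additive] [Pretriangulated D]
    {T : Type*} [Category T] [HasZeroObject T] [Preadditive T] [HasShift T ℤ]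
    [∀ n : ℤ, (shiftFunctor T n).Additive] [Pretriangulated T] [HasBinaryBiproducts T]
    (F : D ⥤ T) (cs : F.CommShift ℤ) (hF : IsTriangulatedWith F cs)
    [F.Full] [F.Faithful]
    (H : Set T) (hH : IsHeart H)
    (himg : ∀ X ∈ H, ∃ Y : D, Nonempty (F.obj Y ≅ X)) :
    F.EssSurj ∧ F.IsEquivalence := by
  let := cs
  have : F.IsTriangulated := hF
  have hF_essSurj : F.EssSurj :=
    essSurj_of_heart_in_image_general F hH.iteratedExtension_shiftClosure_eq_top himg
  exact ⟨hF_essSurj, { }⟩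

end Paper
end
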